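/- arXiv:1512.01201 — 3 statements merged into one kernel-verified Lean document; each statement's English description precedes it below -/
import Mathlib

section
/- (Definition/Proposition 3.12 (ii), combined with the descent of 3.12 (i)) Let m be a positive integer, k a finite field of cardinality q and characteristic p, K a function field of one variable over k, and Σ a k-large set of prime numbers. Let f, g ∈ K ∖ k. Assume that for all but finitely many places O of K with f ∈ O and g ∈ O, there exist nonzero elements a, c of an algebraic closure of the residue field κ(O), both of Σ'-primary order, such that f(O) = a·(1 + c·g(O))^m holds in that algebraic closure. Then there exist a, c ∈ k^× of Σ'-primary order such that f = a·(1 + c·g)^m in K. -/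
/-- A torsion element of a monoid whose (finite) order has all of its prime divisors
outside `S`; for `S' = Primes ∖ S` this says the element has `S'`-primary order. -/
def PrimaryOutside (S : Set ℕ) {M : Type*} [Monoid M] (x : M) : Prop :=
  IsOfFinOrder x ∧ ∀ ℓ : ℕ, ℓ.Prime → ℓ ∣ orderOf x → ℓ ∉ S

/-- `S` is `k`-small, for `k` a finite field of cardinality `q` and characteristic `p`. -/
def IsSmallFor (q p : ℕ) (S : Set ℕ) : Prop :=
  ∃ ℓ₀ N₀ : ℕ, ℓ₀.Prime ∧ ∀ ℓ ∈ S, ℓ.Prime → ℓ ≠ p → ∀ j : ℕ, 1 ≤ j →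
    ¬ ℓ₀ ^ N₀ ∣ orderOf ((q : ZMod (ℓ ^ j)))

/-- `S` is `k`-large if the complementary set of primes is `k`-small. -/
def IsLargeFor (q p : ℕ) (S : Set ℕ) : Prop :=
  IsSmallFor q p {ℓ : ℕ | ℓ.Prime ∧ ℓ ∉ S}

/-- `K` is a function field of one variable over the field `k`. -/
def IsFunctionFieldOneVar (k K : Type*) [Field k] [Field K] [Algebra k K] : Prop :=
  (∃ t : K, Transcendental k t ∧
    FiniteDimensional (IntermediateField.adjoin k {t}) K) ∧
  ∀ x : K, IsAlgebraic k x → x ∈ (algebraMap k K).range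

/-!
Let `F(g, f) = 0` be a polynomial relation over `k`. As `S` is `k`-large, there is a prime power
`l ^ N` that divides no Frobenius period of an element of order prime to `S`. A place of `K`
centered at a point `g = β` of degree `l ^ M` yields `A = a (1 + c X) ^ m` with `F(β, A(β)) = 0`.
Then `A(β)` has at most `deg F` conjugates over `k(β)`, while `β` keeps degree larger than `m` over
the field of definition of `A`; comparing `A` with its conjugates bounds that field independently
of `M`. So finitely many `A` serve infinitely many `β`, and one of them satisfies `F(X, A) = 0`
identically. Hence `A(g)` is conjugate to `f` over `k(g)`, so that `f = B(g)` for a conjugate `B` of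
`A`, and uniqueness of the parameters makes `B` invariant under `Aut(K̄ / K)`, that is, defined
over `k`.
-/

open Polynomial Function Filter IntermediateField

/-! ### Orders modulo composite numbers -/

theorem prime_pow_dvd_lcm_iff {l n a b : ℕ} (hl : l.Prime) :
    l ^ n ∣ a.lcm b ↔ l ^ n ∣ a ∨ l ^ n ∣ b := by
  rcases eq_or_ne a 0 with rfl | ha
  · simp
  rcases eq_or_ne b 0 with rfl | hb
  · simp
  simp [hl.pow_dvd_iff_le_factorization, Nat.factorization_lcm, ha, hb]

theorem gcd_prime_pow_dvd_prime_pow {l M N r : ℕ} (hl : l.Prime) (hr : ¬ l ^ N ∣ r) :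
    (l ^ M).gcd r ∣ l ^ N := by
  obtain ⟨i, -, hi⟩ := (Nat.dvd_prime_pow hl).1 (Nat.gcd_dvd_left (l ^ M) r)
  rw [hi]
  refine pow_dvd_pow l (le_of_not_ge fun hNi => hr ?_)
  exact (pow_dvd_pow l hNi).trans (hi ▸ Nat.gcd_dvd_right _ _)

theorem orderOf_natCast_zmod_mul (q : ℕ) {a b : ℕ} (hab : a.Coprime b) :
    orderOf (q : ZMod (a * b)) = (orderOf (q : ZMod a)).lcm (orderOf (q : ZMod b)) := by
  rw [← (ZMod.chineseRemainder hab).toMulEquiv.orderOf_eq, Prod.orderOf]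
  simp

theorem not_prime_pow_dvd_orderOf_natCast_zmod {q l N : ℕ} (hl : l.Prime) (hN : N ≠ 0) {n : ℕ}
    (hn : n ≠ 0)
    (h : ∀ ℓ : ℕ, ℓ.Prime → ℓ ∣ n → ∀ j : ℕ, 1 ≤ j → ¬ l ^ N ∣ orderOf (q : ZMod (ℓ ^ j))) :
    ¬ l ^ N ∣ orderOf (q : ZMod n) := by
  induction n using Nat.recOnPosPrimePosCoprime with
  | prime_pow ℓ j hℓ hj => exact h ℓ hℓ (dvd_pow_self ℓ hj.ne') j hj
  | zero => exact absurd rfl hn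
  | one =>
    rw [orderOf_eq_one_iff.2 (Subsingleton.elim _ _), Nat.dvd_one, Nat.pow_eq_one]
    simp [hN, hl.ne_one]
  | coprime a b ha hb hab iha ihb =>
    rw [orderOf_natCast_zmod_mul q hab, prime_pow_dvd_lcm_iff hl, not_or]
    exact ⟨iha (by lia) fun ℓ hℓ hd => h ℓ hℓ (hd.mul_right b),
      ihb (by lia) fun ℓ hℓ hd => h ℓ hℓ (hd.mul_left a)⟩

/-! ### Periods of roots and of polynomials under a ring endomorphism -/

section

variable {E : Type*} [CommRing E]

theorem isRoot_iterate {ψ : E →+* E} {F : E[X]} (hF : F.map ψ = F) {x : E} (hx : F.IsRoot x)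
    (n : ℕ) : F.IsRoot (ψ^[n] x) := by
  induction n with
  | zero => exact hx
  | succ n ih => simpa only [iterate_succ_apply', hF] using ih.map (f := ψ)

theorem isPeriodicPt_map_iff {Φ : E →+* E} {n : ℕ} {A : E[X]} :
    IsPeriodicPt (Polynomial.map Φ) n A ↔ A.map (Φ ^ n) = A := by
  have iterate_map : (Polynomial.map Φ)^[n] A = A.map (Φ ^ n) := by
    induction n with
    | zero => exact Polynomial.map_id.symm
    | succ n ih => rw [iterate_succ_apply', ih, Polynomial.map_map, pow_succ']; rfl
  rw [IsPeriodicPt, IsFixedPt, iterate_map]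

variable [IsDomain E]

theorem mem_periodicPts_of_isRoot {ψ : E →+* E} (hψ : Injective ψ) {F : E[X]} (hF0 : F ≠ 0)
    (hF : F.map ψ = F) {x : E} (hx : F.IsRoot x) : x ∈ periodicPts ψ := by
  obtain ⟨i, -, j, -, hij, h⟩ := Set.infinite_univ.exists_lt_map_eq_of_mapsTo
    (fun n _ => isRoot_iterate hF hx n) (finite_setOfPred_isRoot hF0)
  exact mk_mem_periodicPts (Nat.sub_pos_of_lt hij) (iterate_cancel hψ h.symm)

theorem minimalPeriod_le_natDegree_of_isRoot {ψ : E →+* E} {F : E[X]} (hF0 : F ≠ 0)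
    (hF : F.map ψ = F) {x : E} (hx : F.IsRoot x) : minimalPeriod ψ x ≤ F.natDegree := by
  classical
  calc minimalPeriod ψ x = (Finset.range (minimalPeriod ψ x)).card := (Finset.card_range _).symm
    _ ≤ F.roots.toFinset.card := Finset.card_le_card_of_injOn (fun n => ψ^[n] x)
      (fun n _ => by simpa [hF0] using isRoot_iterate hF hx n)
      (by simpa using! iterate_injOn_Iio_minimalPeriod (f := ψ) (x := x))
    _ ≤ F.natDegree := F.roots.toFinset_card_le.trans F.card_roots'

theorem isPeriodicPt_factorial_of_isRoot {ψ : E →+* E} (hψ : Injective ψ) {F : E[X]}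
    (hF0 : F ≠ 0) (hF : F.map ψ = F) {x : E} (hx : F.IsRoot x) :
    IsPeriodicPt ψ F.natDegree.factorial x :=
  isPeriodicPt_iff_minimalPeriod_dvd.2 <| Nat.dvd_factorial
    (minimalPeriod_pos_of_mem_periodicPts (mem_periodicPts_of_isRoot hψ hF0 hF hx))
    (minimalPeriod_le_natDegree_of_isRoot hF0 hF hx)

theorem eq_of_eval_eq_of_isPeriodicPt_map {Φ : E →+* E} {β : E} {r d : ℕ} {A B : E[X]}
    (hA : IsPeriodicPt (Polynomial.map Φ) r A) (hB : IsPeriodicPt (Polynomial.map Φ) r B)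
    (hAd : A.natDegree ≤ d) (hBd : B.natDegree ≤ d)
    (hβ : d * (minimalPeriod Φ β).gcd r < minimalPeriod Φ β) (h : A.eval β = B.eval β) :
    A = B := by
  have sub_fixed : (A - B).map (Φ ^ r) = A - B := by
    rw [Polynomial.map_sub, isPeriodicPt_map_iff.1 hA, isPeriodicPt_map_iff.1 hB]
  have sub_root : (A - B).IsRoot β := by rw [IsRoot, eval_sub, h, sub_self]
  have period_gt : d < minimalPeriod (Φ ^ r) β := by
    rwa [RingHom.coe_pow, minimalPeriod_iterate_eq_div_gcd'
      (minimalPeriod_pos_iff_mem_periodicPts.1 (Nat.zero_lt_of_lt hβ)),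
      Nat.lt_div_iff_mul_lt' (Nat.gcd_dvd_left _ _), mul_comm]
  by_contra hne
  have period_le := minimalPeriod_le_natDegree_of_isRoot (sub_ne_zero.2 hne) sub_fixed sub_root
  exact period_gt.not_ge (period_le.trans (natDegree_sub_le_of_le hAd hBd |>.trans (max_self d).le))

-- `A` and its conjugate by `Φ ^ (n * d!)` agree at `β`, since the value `A.eval β` has at most
-- `d = F.natDegree` conjugates under `Φ ^ n`; as the period of `β` is large, they coincide.
theorem isPeriodicPt_map_of_isRoot_eval {Φ : E →+* E} (hΦ : Injective Φ) {β : E} {r : ℕ}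
    {A F : E[X]} (hA : IsPeriodicPt (Polynomial.map Φ) r A)
    (hβ : A.natDegree * (minimalPeriod Φ β).gcd r < minimalPeriod Φ β) (hF0 : F ≠ 0)
    (hF : IsPeriodicPt (Polynomial.map Φ) (minimalPeriod Φ β) F) (hroot : F.IsRoot (A.eval β)) :
    IsPeriodicPt (Polynomial.map Φ) ((minimalPeriod Φ β).gcd r * F.natDegree.factorial) A := by
  set n := minimalPeriod Φ β
  set s := n * F.natDegree.factorial
  have β_fixed : (Φ ^ s) β = β := by
    rw [RingHom.coe_pow]
    exact (isPeriodicPt_minimalPeriod Φ β).mul_const _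
  have value_fixed : (Φ ^ s) (A.eval β) = A.eval β := by
    have := isPeriodicPt_factorial_of_isRoot (ψ := Φ ^ n) (by simpa using hΦ.iterate n) hF0
      (isPeriodicPt_map_iff.1 hF) hroot
    rwa [RingHom.coe_pow, IsPeriodicPt, ← iterate_mul, IsFixedPt, ← RingHom.coe_pow] at this
  have map_periodic : IsPeriodicPt (Polynomial.map Φ) r (A.map (Φ ^ s)) := by
    rw [isPeriodicPt_map_iff, Polynomial.map_map, ← RingHom.mul_def, (Commute.refl Φ).pow_pow,
      RingHom.mul_def, ← Polynomial.map_map, isPeriodicPt_map_iff.1 hA]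
  have values_agree : (A.map (Φ ^ s)).eval β = A.eval β := by
    rw [← value_fixed, ← eval_map_apply, β_fixed]
  have hs : IsPeriodicPt (Polynomial.map Φ) s A := isPeriodicPt_map_iff.2 <|
    eq_of_eval_eq_of_isPeriodicPt_map map_periodic hA natDegree_map_le le_rfl hβ values_agree
  refine (hs.gcd hA).trans_dvd ((Nat.gcd_mul_left_dvd_mul_gcd _ _ _).trans ?_)
  exact Nat.mul_dvd_mul_left _ (Nat.gcd_dvd_left _ _)

end

/-! ### Polynomials `a (1 + c X) ^ m` with parameters of primary order -/

section

variable {S : Set ℕ} {m : ℕ}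

theorem primaryOutside_map_iff {M N : Type*} [Monoid M] [Monoid N] {φ : M →* N}
    (hφ : Injective φ) {x : M} : PrimaryOutside S (φ x) ↔ PrimaryOutside S x := by
  rw [PrimaryOutside, PrimaryOutside, hφ.isOfFinOrder_iff, orderOf_injective φ hφ]

theorem PrimaryOutside.ne_zero {M : Type*} [MonoidWithZero M] [Nontrivial M] {x : M}
    (hx : PrimaryOutside S x) : x ≠ 0 :=
  hx.1.isUnit.ne_zero

theorem PrimaryOutside.isAlgebraic {k R : Type*} [Field k] [CommRing R] [Algebra k R] {x : R}
    (hx : PrimaryOutside S x) : IsAlgebraic k x :=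
  .of_pow hx.1.orderOf_pos (pow_orderOf_eq_one x ▸ isAlgebraic_one)

/-- The polynomial `a (1 + c X) ^ m`. -/
noncomputable def affinePow {R : Type*} [CommSemiring R] (m : ℕ) (a c : R) : R[X] :=
  C a * (1 + C c * X) ^ m

/-- The polynomials `a (1 + c X) ^ m` whose parameters `a` and `c` have order prime to `S`;
in a nontrivial ring such parameters are automatically nonzero. -/
def primaryAffinePows (S : Set ℕ) (m : ℕ) (R : Type*) [CommSemiring R] : Set R[X] :=
  {A | ∃ a c : R, PrimaryOutside S a ∧ PrimaryOutside S c ∧ A = affinePow m a c}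

theorem aeval_affinePow {R B : Type*} [CommSemiring R] [CommSemiring B] [Algebra R B] (x : B)
    (a c : R) :
    aeval x (affinePow m a c) = algebraMap R B a * (1 + algebraMap R B c * x) ^ m := by
  simp [affinePow]

theorem eval_affinePow {R : Type*} [CommSemiring R] (x a c : R) :
    (affinePow m a c).eval x = a * (1 + c * x) ^ m :=
  aeval_affinePow x a c

theorem map_affinePow {R B : Type*} [CommSemiring R] [CommSemiring B] (φ : R →+* B) (a c : R) :
    (affinePow m a c).map φ = affinePow m (φ a) (φ c) := by
  simp [affinePow, Polynomial.map_pow]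

theorem natDegree_affinePow_le {R : Type*} [CommSemiring R] (a c : R) :
    (affinePow m a c).natDegree ≤ m := by
  rw [affinePow]
  compute_degree

theorem affinePow_inj {R : Type*} [Field R] (hm : m ≠ 0) {a c a' c' : R} (ha : a ≠ 0)
    (hc : c ≠ 0) : affinePow m a c = affinePow m a' c' ↔ a = a' ∧ c = c' := by
  refine ⟨fun h => ?_, fun ⟨ha, hc⟩ => ha ▸ hc ▸ rfl⟩
  have values_eq (x : R) : a * (1 + c * x) ^ m = a' * (1 + c' * x) ^ m := by
    simpa only [eval_affinePow] using congrArg (Polynomial.eval x) h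
  obtain rfl : a = a' := by simpa using values_eq 0
  have root : 1 + c' * -c⁻¹ = 0 := by
    simpa [ha, hm, hc] using (values_eq (-c⁻¹)).symm
  refine ⟨rfl, ?_⟩
  field_simp at root
  linear_combination root

theorem map_mem_primaryAffinePows {R B : Type*} [CommSemiring R] [CommSemiring B] {φ : R →+* B}
    (hφ : Injective φ) {A : R[X]} (hA : A ∈ primaryAffinePows S m R) :
    A.map φ ∈ primaryAffinePows S m B := by
  obtain ⟨a, c, ha, hc, rfl⟩ := hA
  exact ⟨φ a, φ c, (primaryOutside_map_iff (φ := (φ : R →* B)) hφ).2 ha,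
    (primaryOutside_map_iff (φ := (φ : R →* B)) hφ).2 hc, map_affinePow φ a c⟩

theorem natDegree_le_of_mem_primaryAffinePows {R : Type*} [CommSemiring R] {A : R[X]}
    (hA : A ∈ primaryAffinePows S m R) : A.natDegree ≤ m := by
  obtain ⟨a, c, -, -, rfl⟩ := hA
  exact natDegree_affinePow_le a c

theorem exists_isPeriodicPt_map_of_mem_primaryAffinePows {R : Type*} [CommRing R] {Φ : R →+* R}
    {l N : ℕ} (hl : l.Prime)
    (hS : ∀ a : R, PrimaryOutside S a → ¬ l ^ N ∣ minimalPeriod Φ a) {A : R[X]}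
    (hA : A ∈ primaryAffinePows S m R) :
    ∃ r, ¬ l ^ N ∣ r ∧ IsPeriodicPt (Polynomial.map Φ) r A := by
  obtain ⟨a, c, ha, hc, rfl⟩ := hA
  have fixed {x : R} (h : minimalPeriod Φ x ∣ (minimalPeriod Φ a).lcm (minimalPeriod Φ c)) :
      (Φ ^ (minimalPeriod Φ a).lcm (minimalPeriod Φ c)) x = x := by
    rw [RingHom.coe_pow]
    exact isPeriodicPt_iff_minimalPeriod_dvd.2 h
  refine ⟨(minimalPeriod Φ a).lcm (minimalPeriod Φ c), ?_, ?_⟩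
  · rw [prime_pow_dvd_lcm_iff hl, not_or]
    exact ⟨hS a ha, hS c hc⟩
  · rw [isPeriodicPt_map_iff, map_affinePow, fixed (Nat.dvd_lcm_left _ _),
      fixed (Nat.dvd_lcm_right _ _)]

end

/-! ### Frobenius periods -/

theorem exists_irreducible_natDegree_eq (k : Type*) [Field k] [Finite k] {n : ℕ} (hn : n ≠ 0) :
    ∃ P : k[X], Irreducible P ∧ P.natDegree = n := by
  obtain ⟨p, _⟩ := CharP.exists k
  have : Fact p.Prime := ⟨CharP.char_is_prime k p⟩
  have : NeZero n := ⟨hn⟩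
  obtain ⟨α, hα⟩ := Field.exists_primitive_element k (FiniteField.Extension k p n)
  exact ⟨minpoly k α, minpoly.irreducible (.of_finite k α),
    ((Field.primitive_element_iff_minpoly_natDegree_eq k α).1 hα).trans
      (FiniteField.finrank_extension k p n)⟩

theorem finite_setOf_natDegree_le_coeff_mem {R : Type*} [Semiring R] {T : Set R} (hT : T.Finite)
    (m : ℕ) : {A : R[X] | A.natDegree ≤ m ∧ ∀ i, A.coeff i ∈ T}.Finite := by
  refine Set.Finite.of_finite_image (f := fun A (i : Fin (m + 1)) => A.coeff i)
    ((Set.Finite.pi' fun _ => hT).subset (Set.image_subset_iff.2 fun A hA i => hA.2 i)) ?_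
  intro A hA B hB hAB
  refine (ext_iff_natDegree_le hA.1 hB.1).2 fun i hi => ?_
  exact congrFun hAB ⟨i, by lia⟩

section

variable {k E : Type*} [Field k] [Fintype k] [Field E] [Algebra k E]

theorem minimalPeriod_frobeniusAlgHom_eq_orderOf {a : E} (ha : IsOfFinOrder a) :
    minimalPeriod (FiniteField.frobeniusAlgHom k E) a =
      orderOf (Fintype.card k : ZMod (orderOf a)) := by
  refine Nat.dvd_right_iff_eq.1 fun n => ?_
  rw [← isPeriodicPt_iff_minimalPeriod_dvd, orderOf_dvd_iff_pow_eq_one, IsPeriodicPt, IsFixedPt,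
    FiniteField.coe_frobeniusAlgHom, pow_iterate, ← Nat.cast_pow, ← Nat.cast_one,
    ZMod.natCast_eq_natCast_iff, ← ha.pow_eq_pow_iff_modEq, pow_one]

theorem not_dvd_orderOf_of_charP {p : ℕ} [Fact p.Prime] [CharP E p] {a : E} (ha : IsOfFinOrder a) :
    ¬ p ∣ orderOf a := by
  have : NeZero (orderOf a) := ⟨ha.orderOf_pos.ne'⟩
  rw [← CharP.cast_eq_zero_iff E p]
  exact (IsPrimitiveRoot.orderOf a).neZero'.out

theorem IsLargeFor.exists_not_dvd_minimalPeriod {p : ℕ} [CharP k p] {S : Set ℕ}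
    (hS : IsLargeFor (Fintype.card k) p S) :
    ∃ l N : ℕ, l.Prime ∧ ∀ a : E, PrimaryOutside S a →
      ¬ l ^ N ∣ minimalPeriod (FiniteField.frobeniusAlgHom k E) a := by
  obtain ⟨l, N, hl, hlN⟩ := hS
  have : Fact p.Prime := ⟨CharP.char_is_prime k p⟩
  have : CharP E p := charP_of_injective_algebraMap (algebraMap k E).injective p
  refine ⟨l, N + 1, hl, fun a ha => ?_⟩
  rw [minimalPeriod_frobeniusAlgHom_eq_orderOf ha.1]
  refine not_prime_pow_dvd_orderOf_natCast_zmod hl N.succ_ne_zero ha.1.orderOf_pos.ne'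
    fun ℓ hℓ hℓa j hj hdvd => ?_
  have ne_char : ℓ ≠ p := fun h => not_dvd_orderOf_of_charP (p := p) ha.1 (h ▸ hℓa)
  exact hlN ℓ ⟨hℓ, ha.2 ℓ hℓ hℓa⟩ hℓ ne_char j hj ((pow_dvd_pow l N.le_succ).trans hdvd)

theorem minimalPeriod_frobeniusAlgHom_eq_natDegree {P : k[X]} (hP : Irreducible P) {β : E}
    (hβ : aeval β P = 0) : minimalPeriod (FiniteField.frobeniusAlgHom k E) β = P.natDegree := by
  refine Nat.dvd_right_iff_eq.1 fun n => ?_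
  rw [hP.natDegree_dvd_iff_dvd_X_pow_card_pow_sub_X, ← hP.dvd_iff_aeval_eq_zero hβ,
    ← isPeriodicPt_iff_minimalPeriod_dvd, IsPeriodicPt, IsFixedPt,
    FiniteField.coe_frobeniusAlgHom, pow_iterate]
  simp [sub_eq_zero, Nat.card_eq_fintype_card]

variable (k E) in
theorem finite_setOf_isPeriodicPt_frobeniusAlgHom {D : ℕ} (hD : D ≠ 0) :
    {x : E | IsPeriodicPt (FiniteField.frobeniusAlgHom k E) D x}.Finite := by
  refine (finite_setOfPred_isRoot (FiniteField.X_pow_card_pow_sub_X_ne_zero E hD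
    (Fintype.one_lt_card (α := k)))).subset fun x hx => ?_
  rw [Set.mem_ofPred_eq, IsPeriodicPt, IsFixedPt, FiniteField.coe_frobeniusAlgHom,
    pow_iterate] at hx
  simp [hx]

variable (k E) in
theorem finite_setOf_isPeriodicPt_map_frobeniusAlgHom {D : ℕ} (hD : D ≠ 0) (m : ℕ) :
    {A : E[X] | A.natDegree ≤ m ∧
      IsPeriodicPt (Polynomial.map (FiniteField.frobeniusAlgHom k E).toRingHom) D A}.Finite := by
  refine (finite_setOf_natDegree_le_coeff_mem
    (finite_setOf_isPeriodicPt_frobeniusAlgHom k E hD) m).subset fun A hA => ⟨hA.1, fun i => ?_⟩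
  have := congrArg (coeff · i) (isPeriodicPt_map_iff.1 hA.2)
  rwa [coeff_map, RingHom.coe_pow] at this

end

/-! ### Specialization of bivariate polynomials -/

section

variable {k : Type*} [CommSemiring k]

theorem map_aevalAeval {A B : Type*} [CommSemiring A] [CommSemiring B] [Algebra k A] [Algebra k B]
    (φ : A →ₐ[k] B) (x y : A) (F : k[X][X]) :
    φ (aevalAeval x y F) = aevalAeval (φ x) (φ y) F := by
  have : φ.comp (aevalAeval x y) = aevalAeval (φ x) (φ y) := by ext <;> simp
  exact DFunLike.congr_fun this F

theorem aevalAeval_eq_eval_map {A : Type*} [CommSemiring A] [Algebra k A] (x y : A)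
    (F : k[X][X]) :
    aevalAeval x y F = (F.map (aeval (R := k) x).toRingHom).eval y := by
  have : (aevalAeval (R := k) x y).toRingHom = eval₂RingHom (aeval x).toRingHom y := by
    ext <;> simp
  rw [eval_map]
  exact DFunLike.congr_fun this F

end

theorem exists_aevalAeval_X_eq_zero {k E : Type*} [CommRing k] [CommRing E] [IsDomain E]
    [Algebra k E] {T : Set E[X]} (hT : T.Finite) {F : k[X][X]}
    (h : {β : E | ∃ A ∈ T, aevalAeval β (A.eval β) F = 0}.Infinite) :
    ∃ A ∈ T, aevalAeval (X : E[X]) A F = 0 := by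
  by_contra! hne
  refine h ((hT.biUnion fun A hA => finite_setOfPred_isRoot (hne A hA)).subset ?_)
  rintro β ⟨A, hA, hβ⟩
  refine Set.mem_biUnion hA ?_
  have := map_aevalAeval ((aeval (R := E) β).restrictScalars k) (X : E[X]) A F
  simpa [hβ] using this

theorem isPeriodicPt_map_map_aeval {k E : Type*} [CommSemiring k] [CommRing E] [Algebra k E]
    {Φ : E →ₐ[k] E} {β : E} {n : ℕ} (hβ : IsPeriodicPt Φ n β) (F : k[X][X]) :
    IsPeriodicPt (Polynomial.map Φ.toRingHom) n (F.map (aeval (R := k) β).toRingHom) := by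
  rw [isPeriodicPt_map_iff, Polynomial.map_map]
  congr 1
  ext x
  · simp [iterate_fixed (Φ.commutes x)]
  · simpa using hβ.eq

theorem map_aeval_ne_zero_of_isCoprime_leadingCoeff {k E : Type*} [Field k] [CommRing E]
    [Nontrivial E] [Algebra k E] {P : k[X]} {β : E} (hβ : aeval β P = 0) {F : k[X][X]}
    (hF : IsCoprime P F.leadingCoeff) : F.map (aeval (R := k) β).toRingHom ≠ 0 := by
  have : aeval β F.leadingCoeff ≠ 0 :=
    (aeval_ne_zero_of_isCoprime hF β).resolve_left (not_not.2 hβ)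
  intro h
  exact this (by simpa using congrArg (coeff · F.natDegree) h)

open FiniteField in
theorem isPeriodicPt_map_of_aevalAeval_eq_zero {k E : Type*} [Field k] [Fintype k] [Field E]
    [Algebra k E] {S : Set ℕ} {l N M m : ℕ} (hl : l.Prime)
    (hS : ∀ a : E, PrimaryOutside S a → ¬ l ^ N ∣ minimalPeriod (frobeniusAlgHom k E) a)
    (hM : m * l ^ N < l ^ M) {P : k[X]} (hP : Irreducible P) (hPdeg : P.natDegree = l ^ M)
    {F : k[X][X]} (hF : IsCoprime P F.leadingCoeff) {β : E} (hβ : aeval β P = 0) {A : E[X]}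
    (hA : A ∈ primaryAffinePows S m E) (h : aevalAeval β (A.eval β) F = 0) :
    IsPeriodicPt (Polynomial.map (frobeniusAlgHom k E).toRingHom)
      (l ^ N * F.natDegree.factorial) A := by
  obtain ⟨r, hlr, hr⟩ := exists_isPeriodicPt_map_of_mem_primaryAffinePows
    (Φ := (frobeniusAlgHom k E).toRingHom) hl hS hA
  have period : minimalPeriod (frobeniusAlgHom k E).toRingHom β = l ^ M :=
    (minimalPeriod_frobeniusAlgHom_eq_natDegree hP hβ).trans hPdeg
  have gcd_dvd : (minimalPeriod (frobeniusAlgHom k E).toRingHom β).gcd r ∣ l ^ N :=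
    period ▸ gcd_prime_pow_dvd_prime_pow hl hlr
  have gcd_lt : A.natDegree * (minimalPeriod (frobeniusAlgHom k E).toRingHom β).gcd r <
      minimalPeriod (frobeniusAlgHom k E).toRingHom β :=
    calc _ ≤ m * l ^ N := Nat.mul_le_mul (natDegree_le_of_mem_primaryAffinePows hA)
          (Nat.le_of_dvd (pow_pos hl.pos N) gcd_dvd)
      _ < l ^ M := hM
      _ = _ := period.symm
  refine (isPeriodicPt_map_of_isRoot_eval (RingHom.injective _) hr gcd_lt
    (map_aeval_ne_zero_of_isCoprime_leadingCoeff hβ hF)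
    (isPeriodicPt_map_map_aeval (isPeriodicPt_minimalPeriod _ β) F)
    ((aevalAeval_eq_eval_map β _ F).symm.trans h)).trans_dvd ?_
  exact Nat.mul_dvd_mul gcd_dvd (Nat.factorial_dvd_factorial natDegree_map_le)

theorem isCoprime_of_irreducible_of_natDegree_lt {k : Type*} [Field k] {P Q : k[X]}
    (hP : Irreducible P) (hQ : Q ≠ 0) (hlt : Q.natDegree < P.natDegree) : IsCoprime P Q :=
  hP.coprime_iff_not_dvd.2 fun h => hlt.not_ge (natDegree_le_of_dvd h hQ)

theorem isCoprime_of_irreducible_of_natDegree_ne {k : Type*} [Field k] {P Q : k[X]}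
    (hP : Irreducible P) (hQ : Irreducible Q) (hne : P.natDegree ≠ Q.natDegree) : IsCoprime P Q :=
  hP.coprime_iff_not_dvd.2 fun h => hne <| natDegree_eq_of_degree_eq
    (degree_eq_degree_of_associated (hP.associated_of_dvd hQ h))

theorem exists_mem_primaryAffinePows_algebraicClosure (k : Type*) {L : Type*} [Field k] [Field L]
    [Algebra k L] {S : Set ℕ} {m : ℕ} {A : L[X]} (hA : A ∈ primaryAffinePows S m L) :
    ∃ B ∈ primaryAffinePows S m (algebraicClosure k L), B.map (algebraMap _ L) = A := by
  obtain ⟨a, c, ha, hc, rfl⟩ := hA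
  lift a to algebraicClosure k L using mem_algebraicClosure_iff.2 ha.isAlgebraic
  lift c to algebraicClosure k L using mem_algebraicClosure_iff.2 hc.isAlgebraic
  have primary_iff {x : algebraicClosure k L} : PrimaryOutside S (x : L) ↔ PrimaryOutside S x :=
    primaryOutside_map_iff (φ := (algebraicClosure k L).val.toMonoidHom) Subtype.val_injective
  exact ⟨_, ⟨a, c, primary_iff.1 ha, primary_iff.1 hc, rfl⟩, map_affinePow _ a c⟩

theorem eq_of_eval_eq_of_transcendental {k L : Type*} [Field k] [Field L] [Algebra k L]
    {S : Set ℕ} {m : ℕ} {A B : L[X]} (hA : A ∈ primaryAffinePows S m L)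
    (hB : B ∈ primaryAffinePows S m L) {g : L} (hg : Transcendental k g)
    (h : A.eval g = B.eval g) : A = B := by
  obtain ⟨A, -, rfl⟩ := exists_mem_primaryAffinePows_algebraicClosure k hA
  obtain ⟨B, -, rfl⟩ := exists_mem_primaryAffinePows_algebraicClosure k hB
  rw [eval_map_algebraMap, eval_map_algebraMap] at h
  have hg' : Transcendental (algebraicClosure k L) g := hg.extendScalars _
  rw [transcendental_iff_injective.1 hg' h]

theorem exists_aevalAeval_eq_zero_of_isAlgClosed {k L : Type*} (E : Type*) [Field k] [Field L]
    [Algebra k L] [Field E] [Algebra k E] [IsAlgClosed E] {P : k[X]} (hP : P ≠ 0) {F : k[X][X]}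
    {ξ : L} (hξ : aeval ξ P = 0) {S : Set ℕ} {m : ℕ} {A : L[X]} (hA : A ∈ primaryAffinePows S m L)
    (hF : aevalAeval ξ (A.eval ξ) F = 0) :
    ∃ β : E, aeval β P = 0 ∧ ∃ B ∈ primaryAffinePows S m E, aevalAeval β (B.eval β) F = 0 := by
  obtain ⟨B, hB, rfl⟩ := exists_mem_primaryAffinePows_algebraicClosure k hA
  lift ξ to algebraicClosure k L using mem_algebraicClosure_iff.2 ⟨P, hP, hξ⟩
  let incl : algebraicClosure k L →ₐ[k] L := (algebraicClosure k L).val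
  let ι : algebraicClosure k L →ₐ[k] E := IsAlgClosed.lift
  have hξ' : aeval ξ P = 0 := (map_eq_zero incl).1 <| by
    rw [← aeval_algHom_apply]
    exact hξ
  have hF' : aevalAeval ξ (B.eval ξ) F = 0 := (map_eq_zero incl).1 <| by
    rw [map_aevalAeval, ← hF]
    exact congrArg (aevalAeval _ · F) (eval_map_apply (algebraMap _ L) ξ).symm
  refine ⟨ι ξ, ?_, B.map ι.toRingHom, map_mem_primaryAffinePows (RingHom.injective _) hB, ?_⟩
  · rw [aeval_algHom_apply, hξ', map_zero]
  · rw [← map_zero ι, ← hF', map_aevalAeval]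
    exact congrArg (aevalAeval _ · F) (eval_map_apply ι.toRingHom ξ)

/-! ### Places centered at a closed point of the affine line -/

theorem isUnit_aeval_of_isCoprime {k R : Type*} [CommRing k] [CommRing R] [IsLocalRing R]
    [Algebra k R] {x : R} {P Q : k[X]} (hP : aeval x P ∈ IsLocalRing.maximalIdeal R)
    (hPQ : IsCoprime P Q) : IsUnit (aeval x Q) := by
  obtain ⟨u, v, huv⟩ := hPQ
  have sum_eq_one : aeval x u * aeval x P + aeval x v * aeval x Q = 1 := by
    rw [← map_mul, ← map_mul, ← map_add, huv, map_one]
  rcases IsLocalRing.isUnit_or_isUnit_of_add_one sum_eq_one with hu | hv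
  · exact absurd (isUnit_of_mul_isUnit_right hu) ((IsLocalRing.mem_maximalIdeal _).1 hP)
  · exact isUnit_of_mul_isUnit_right hv

theorem isIntegral_of_isUnit_leadingCoeff {R B : Type*} [CommRing R] [CommRing B] [Algebra R B]
    {G : R[X]} (hG : IsUnit G.leadingCoeff) {f : B} (hf : aeval f G = 0) : IsIntegral R f :=
  ⟨_, monic_of_isUnit_leadingCoeff_inv_smul hG, by
    rw [← aeval_def, Units.smul_def, map_smul, hf, smul_zero]⟩

section

variable {k K : Type*} [Field k] [Field K] [Algebra k K]

/-- The valuation ring `O` of `K` contains the constants and `g`, and `P(g)` lies in its maximal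
ideal: `O` is centered at the closed point `P = 0` of the affine line with coordinate `g`. -/
structure IsCenteredAt (O : ValuationSubring K) (g : K) (P : k[X]) : Prop where
  algebraMap_mem (c : k) : algebraMap k K c ∈ O
  mem : g ∈ O
  aeval_mem_nonunits : aeval g P ∈ O.nonunits

theorem exists_isCenteredAt {g : K} (hg : Transcendental k g) {P : k[X]} (hP : ¬ IsUnit P) :
    ∃ O : ValuationSubring K, IsCenteredAt O g P := by
  let A : Subring K := (aeval (R := k) g).toRingHom.range
  let Pg : A := ⟨aeval g P, P, rfl⟩
  have span_ne_top : Ideal.span {Pg} ≠ ⊤ := by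
    rw [Ne, Ideal.span_singleton_eq_top]
    intro hu
    obtain ⟨⟨_, Q, rfl⟩, hQ⟩ := isUnit_iff_exists_inv.1 hu
    have hPQ : P * Q = 1 := transcendental_iff_injective.1 hg <| by
      simpa using congrArg Subtype.val hQ
    exact hP (.of_mul_eq_one Q hPQ)
  obtain ⟨O, hAO, hO⟩ := Ideal.image_subset_nonunits_valuationSubring _ span_ne_top
  exact ⟨O, fun c => hAO ⟨C c, by simp⟩, hAO ⟨X, by simp⟩, hO ⟨Pg, Ideal.subset_span rfl, rfl⟩⟩

namespace IsCenteredAt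

variable {O : ValuationSubring K} {f g : K} {P Q : k[X]}

theorem ne_top (h : IsCenteredAt O g P) (hg : Transcendental k g) (hP : P ≠ 0) : O ≠ ⊤ := by
  rintro rfl
  have aeval_ne_zero : aeval g P ≠ 0 :=
    (map_ne_zero_iff _ (transcendental_iff_injective.1 hg)).2 hP
  obtain ⟨_, nonunit⟩ :=
    ValuationSubring.mem_nonunits_iff_exists_mem_maximalIdeal.1 h.aeval_mem_nonunits
  exact (IsLocalRing.mem_maximalIdeal _).1 nonunit <| .of_mul_eq_one
    ⟨(aeval g P)⁻¹, ValuationSubring.mem_top _⟩ (Subtype.ext (mul_inv_cancel₀ aeval_ne_zero))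

/-- The `k`-algebra structure on a valuation ring that contains the constants. -/
abbrev algebra (h : IsCenteredAt O g P) : Algebra k O :=
  ((algebraMap k K).codRestrict O.toSubring h.algebraMap_mem).toAlgebra

theorem isScalarTower (h : IsCenteredAt O g P) :
    letI := h.algebra
    IsScalarTower k O K :=
  letI := h.algebra
  .of_algebraMap_eq fun _ => rfl

theorem aeval_mem_maximalIdeal (h : IsCenteredAt O g P) :
    letI := h.algebra
    aeval (⟨g, h.mem⟩ : O) P ∈ IsLocalRing.maximalIdeal O := by
  let := h.algebra
  have := h.isScalarTower
  rw [← ValuationSubring.coe_mem_nonunits_iff]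
  have coe_aeval := aeval_algebraMap_apply K (⟨g, h.mem⟩ : O) P
  exact (congrArg (· ∈ O.nonunits) coe_aeval).mp h.aeval_mem_nonunits

theorem not_of_isCoprime (hP : IsCenteredAt O g P) (hPQ : IsCoprime P Q) :
    ¬ IsCenteredAt O g Q := fun hQ =>
  letI := hP.algebra
  (IsLocalRing.mem_maximalIdeal _).1 hQ.aeval_mem_maximalIdeal
    (isUnit_aeval_of_isCoprime hP.aeval_mem_maximalIdeal hPQ)

theorem mem_of_aevalAeval_eq_zero (h : IsCenteredAt O g P) {F : k[X][X]}
    (hPF : IsCoprime P F.leadingCoeff) (hF : aevalAeval g f F = 0) : f ∈ O := by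
  let := h.algebra
  have := h.isScalarTower
  set x : O := ⟨g, h.mem⟩
  have unit : IsUnit (aeval x F.leadingCoeff) :=
    isUnit_aeval_of_isCoprime h.aeval_mem_maximalIdeal hPF
  have integral : IsIntegral O f := by
    refine isIntegral_of_isUnit_leadingCoeff (G := F.map (aeval (R := k) x).toRingHom) ?_ ?_
    · rwa [leadingCoeff_map_of_leadingCoeff_ne_zero _ unit.ne_zero]
    · rw [← hF, aevalAeval_eq_eval_map, aeval_def, ← eval_map, Polynomial.map_map]
      congr 2
      exact RingHom.ext fun Q => (aeval_algebraMap_apply K x Q).symm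
  obtain ⟨y, rfl⟩ := IsIntegrallyClosed.isIntegral_iff.1 integral
  exact y.2

theorem exists_aevalAeval_eq_zero (h : IsCenteredAt O g P) (hP : P ≠ 0) {F : k[X][X]} (hf : f ∈ O)
    (hF : aevalAeval g f F = 0) {L : Type*} (E : Type*) [Field L]
    [Algebra (IsLocalRing.ResidueField O) L] [Field E] [Algebra k E] [IsAlgClosed E]
    {S : Set ℕ} {m : ℕ} {A : L[X]} (hA : A ∈ primaryAffinePows S m L)
    (hfg : algebraMap _ L (IsLocalRing.residue O ⟨f, hf⟩) =
      A.eval (algebraMap _ L (IsLocalRing.residue O ⟨g, h.mem⟩))) :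
    ∃ β : E, aeval β P = 0 ∧ ∃ B ∈ primaryAffinePows S m E, aevalAeval β (B.eval β) F = 0 := by
  let := h.algebra
  have := h.isScalarTower
  let θ : O →+* L := (algebraMap _ L).comp (IsLocalRing.residue O)
  let : Algebra k L := (θ.comp (algebraMap k O)).toAlgebra
  let θₐ : O →ₐ[k] L := ⟨θ, fun _ => rfl⟩
  have aeval_eq_zero : aeval (θₐ ⟨g, h.mem⟩) P = 0 := by
    rw [aeval_algHom_apply]
    change algebraMap _ L (IsLocalRing.residue O _) = 0
    rw [(IsLocalRing.residue_eq_zero_iff _).2 h.aeval_mem_maximalIdeal, map_zero]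
  have hF' : aevalAeval (⟨g, h.mem⟩ : O) ⟨f, hf⟩ F = 0 := Subtype.val_injective <|
    (map_aevalAeval (IsScalarTower.toAlgHom k O K) _ _ F).trans hF
  refine exists_aevalAeval_eq_zero_of_isAlgClosed E hP aeval_eq_zero hA ?_
  rw [← map_zero θₐ, ← hF', map_aevalAeval]
  exact congrArg (aevalAeval _ · F) hfg.symm

end IsCenteredAt

variable (k) in
/-- The places of `K` over `k` with `f, g ∈ O` at which `f(O) = a (1 + c g(O)) ^ m` has no solution
`a, c` of order prime to `S` in an algebraic closure of the residue field. -/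
def exceptionalPlaces (S : Set ℕ) (m : ℕ) (f g : K) : Set (ValuationSubring K) :=
  {O | (∀ c : k, algebraMap k K c ∈ O) ∧ O ≠ ⊤ ∧ ∃ (hf : f ∈ O) (hg : g ∈ O),
    ¬ ∃ A ∈ primaryAffinePows S m (AlgebraicClosure (IsLocalRing.ResidueField O)),
      algebraMap _ _ (IsLocalRing.residue O ⟨f, hf⟩) =
        A.eval (algebraMap _ _ (IsLocalRing.residue O ⟨g, hg⟩))}

theorem finite_setOf_exists_isCenteredAt {ι : Type*} {P : ι → k[X]}
    (hP : Pairwise (IsCoprime on P)) (g : K) {T : Set (ValuationSubring K)} (hT : T.Finite) :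
    {i | ∃ O ∈ T, IsCenteredAt O g (P i)}.Finite := by
  have subsingleton (O : ValuationSubring K) : {i | IsCenteredAt O g (P i)}.Subsingleton :=
    fun i hi j hj => by_contra fun hij => hi.not_of_isCoprime (hP hij) hj
  refine (hT.biUnion fun O _ => (subsingleton O).finite).subset ?_
  rintro i ⟨O, hO, hi⟩
  exact Set.mem_biUnion hO hi

theorem exists_aevalAeval_eq_zero_of_notMem_exceptionalPlaces (E : Type*) [Field E] [Algebra k E]
    [IsAlgClosed E] {S : Set ℕ} {m : ℕ} {f g : K} (hg : Transcendental k g) {F : k[X][X]}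
    (hF : aevalAeval g f F = 0) {P : k[X]} (hP : Irreducible P)
    (hPF : IsCoprime P F.leadingCoeff)
    (hO : ∀ O ∈ exceptionalPlaces k S m f g, ¬ IsCenteredAt O g P) :
    ∃ β : E, aeval β P = 0 ∧ ∃ A ∈ primaryAffinePows S m E, aevalAeval β (A.eval β) F = 0 := by
  obtain ⟨O, h⟩ := exists_isCenteredAt hg hP.not_isUnit
  have hf : f ∈ O := h.mem_of_aevalAeval_eq_zero hPF hF
  have : O ∉ exceptionalPlaces k S m f g := fun hmem => hO O hmem h
  obtain ⟨A, hA, hfg⟩ : ∃ A ∈ primaryAffinePows S m (AlgebraicClosure (IsLocalRing.ResidueField O)),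
      algebraMap _ _ (IsLocalRing.residue O ⟨f, hf⟩) =
        A.eval (algebraMap _ _ (IsLocalRing.residue O ⟨g, h.mem⟩)) := by
    by_contra hne
    exact this ⟨h.algebraMap_mem, h.ne_top hg hP.ne_zero, hf, h.mem, hne⟩
  exact h.exists_aevalAeval_eq_zero hP.ne_zero hf hF E hA hfg

theorem eventually_exists_aevalAeval_eq_zero (E : Type*) [Field E] [Algebra k E] [IsAlgClosed E]
    {S : Set ℕ} {m : ℕ} {f g : K} (hg : Transcendental k g)
    (hQ : (exceptionalPlaces k S m f g).Finite) {F : k[X][X]} (hF0 : F ≠ 0)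
    (hF : aevalAeval g f F = 0) {P : ℕ → k[X]} (hP : ∀ M, Irreducible (P M))
    (hPdeg : StrictMono fun M => (P M).natDegree) :
    ∀ᶠ M in atTop, IsCoprime (P M) F.leadingCoeff ∧ ∃ β : E, aeval β (P M) = 0 ∧
      ∃ A ∈ primaryAffinePows S m E, aevalAeval β (A.eval β) F = 0 := by
  have coprime : Pairwise (IsCoprime on P) := fun i j hij =>
    isCoprime_of_irreducible_of_natDegree_ne (hP i) (hP j) (hPdeg.injective.ne hij)
  have eventually_good := (finite_setOf_exists_isCenteredAt coprime g hQ).eventually_cofinite_notMem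
  rw [Nat.cofinite_eq_atTop] at eventually_good
  filter_upwards [eventually_good,
    hPdeg.tendsto_atTop.eventually_gt_atTop F.leadingCoeff.natDegree] with M good lt_deg
  have hPF : IsCoprime (P M) F.leadingCoeff :=
    isCoprime_of_irreducible_of_natDegree_lt (hP M) (leadingCoeff_ne_zero.2 hF0) lt_deg
  exact ⟨hPF, exists_aevalAeval_eq_zero_of_notMem_exceptionalPlaces E hg hF (hP M) hPF
    fun O hO h => good ⟨O, hO, h⟩⟩

theorem exists_mem_primaryAffinePows_aevalAeval_X_eq_zero [Fintype k] (E : Type*) [Field E]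
    [Algebra k E] [IsAlgClosed E] {p : ℕ} [CharP k p] {S : Set ℕ}
    (hS : IsLargeFor (Fintype.card k) p S) {m : ℕ} {f g : K} (hg : Transcendental k g)
    (hQ : (exceptionalPlaces k S m f g).Finite) {F : k[X][X]} (hF0 : F ≠ 0)
    (hF : aevalAeval g f F = 0) :
    ∃ A ∈ primaryAffinePows S m E, aevalAeval (X : E[X]) A F = 0 := by
  obtain ⟨l, N, hl, hlN⟩ := hS.exists_not_dvd_minimalPeriod (E := E)
  choose P hP hPdeg using fun M => exists_irreducible_natDegree_eq k (pow_ne_zero M hl.ne_zero)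
  have pow_strictMono : StrictMono fun M => l ^ M := pow_right_strictMono₀ hl.one_lt
  have period_ne_zero : l ^ N * F.natDegree.factorial ≠ 0 :=
    mul_ne_zero (pow_ne_zero N hl.ne_zero) (Nat.factorial_ne_zero _)
  let T : Set E[X] := {A ∈ primaryAffinePows S m E | IsPeriodicPt
    (Polynomial.map (FiniteField.frobeniusAlgHom k E).toRingHom) (l ^ N * F.natDegree.factorial) A}
  have T_finite : T.Finite :=
    (finite_setOf_isPeriodicPt_map_frobeniusAlgHom k E period_ne_zero m).subset
      fun A hA => ⟨natDegree_le_of_mem_primaryAffinePows hA.1, hA.2⟩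
  suffices h : {β : E | ∃ A ∈ T, aevalAeval β (A.eval β) F = 0}.Infinite by
    obtain ⟨A, hA, hAF⟩ := exists_aevalAeval_X_eq_zero T_finite h
    exact ⟨A, hA.1, hAF⟩
  refine .of_image (minimalPeriod (FiniteField.frobeniusAlgHom k E)) <|
    Set.infinite_of_forall_exists_gt fun n => ?_
  obtain ⟨M, ⟨hPF, β, hβ, A, hA, hAF⟩, lt_n, lt_mul⟩ :=
    ((eventually_exists_aevalAeval_eq_zero E hg hQ hF0 hF hP (by simpa only [hPdeg])).and <|
      (pow_strictMono.tendsto_atTop.eventually_gt_atTop n).and <|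
      pow_strictMono.tendsto_atTop.eventually_gt_atTop (m * l ^ N)).exists
  refine ⟨_, ⟨β, ⟨A, ⟨hA, ?_⟩, hAF⟩, rfl⟩, ?_⟩
  · exact isPeriodicPt_map_of_aevalAeval_eq_zero hl hlN lt_mul (hP M) (hPdeg M) hPF hβ hA hAF
  · rwa [minimalPeriod_frobeniusAlgHom_eq_natDegree (hP M) hβ, hPdeg]

end

/-! ### Descent to the constant field -/

open scoped IntermediateField.algebraAdjoinAdjoin in
theorem exists_map_aeval_gen_eq_C_mul {k K : Type*} [Field k] [Field K] [Algebra k K] {g : K}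
    (Q : k⟮g⟯[X]) : ∃ F : k[X][X], ∃ b : k⟮g⟯, b ≠ 0 ∧
      F.map (aeval (R := k) (AdjoinSimple.gen k g)).toRingHom = C b * Q := by
  obtain ⟨b, hb, hG⟩ := IsLocalization.integerNormalization_spec
    (nonZeroDivisors (Algebra.adjoin k {g})) Q
  let γ : Algebra.adjoin k {g} := ⟨g, Algebra.self_mem_adjoin_singleton k g⟩
  have surjective : Surjective (aeval (R := k) γ).toRingHom := by
    rintro ⟨z, hz⟩
    rw [Algebra.adjoin_singleton_eq_range_aeval] at hz
    obtain ⟨R, rfl⟩ := hz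
    exact ⟨R, Subtype.ext (aeval_algebraMap_apply K γ R).symm⟩
  obtain ⟨F, hF⟩ := map_surjective _ surjective
    (IsLocalization.integerNormalization (nonZeroDivisors (Algebra.adjoin k {g})) Q)
  refine ⟨F, algebraMap _ _ b, by simpa using nonZeroDivisors.ne_zero hb, ?_⟩
  rw [← smul_eq_C_mul, algebraMap_smul, ← hG, ← hF, Polynomial.map_map]
  congr 1
  exact RingHom.ext fun R => aeval_algebraMap_apply k⟮g⟯ γ R

theorem exists_aevalAeval_eq_zero_iff_aeval_eq_zero {k K L : Type*} [Field k] [Field K]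
    [Algebra k K] {g : K} [Field L] [Algebra k L] [Algebra k⟮g⟯ L] [IsScalarTower k k⟮g⟯ L]
    {Q : k⟮g⟯[X]} (hQ : Q ≠ 0) : ∃ F : k[X][X], F ≠ 0 ∧ ∀ y : L,
      aevalAeval (algebraMap k⟮g⟯ L (AdjoinSimple.gen k g)) y F = 0 ↔ aeval y Q = 0 := by
  obtain ⟨F, b, hb, hF⟩ := exists_map_aeval_gen_eq_C_mul Q
  refine ⟨F, ?_, fun y => ?_⟩
  · rintro rfl
    simp [hb, hQ] at hF
  · have : (aeval (R := k) (algebraMap k⟮g⟯ L (AdjoinSimple.gen k g))).toRingHom =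
        (algebraMap k⟮g⟯ L).comp (aeval (AdjoinSimple.gen k g)).toRingHom :=
      RingHom.ext fun R => aeval_algebraMap_apply L (AdjoinSimple.gen k g) R
    rw [aevalAeval_eq_eval_map, this, ← Polynomial.map_map, hF, eval_map_algebraMap, map_mul,
      aeval_C, mul_eq_zero, map_eq_zero, or_iff_right hb]

theorem exists_mem_primaryAffinePows_eval_eq {K L : Type*} [Field K] [Field L] [Algebra K L]
    [Normal K L] {S : Set ℕ} {m : ℕ} {g : K} {f : L} {A : L[X]}
    (hA : A ∈ primaryAffinePows S m L)
    (h : aeval (A.eval (algebraMap K L g)) (minpoly K f) = 0) :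
    ∃ B ∈ primaryAffinePows S m L, B.eval (algebraMap K L g) = f := by
  obtain ⟨σ, hσ⟩ := minpoly.exists_algEquiv_of_root (Algebra.IsAlgebraic.isAlgebraic f) h
  refine ⟨A.map (σ : L →+* L), map_mem_primaryAffinePows (RingHom.injective _) hA, ?_⟩
  have := eval_map_apply (p := A) (σ : L →+* L) (algebraMap K L g)
  simpa [hσ] using this

theorem mem_range_algebraMap_of_forall_algEquiv_apply_eq {k K L : Type*} [Field k] [PerfectField k]
    [Field K] [Algebra k K] [IsIntegrallyClosedIn k K] [Field L] [Algebra k L] [Algebra K L]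
    [IsScalarTower k K L] [Normal K L] {x : L} (hx : IsAlgebraic k x)
    (hfix : ∀ τ : L ≃ₐ[K] L, τ x = x) : x ∈ (algebraMap k L).range := by
  have separable : IsSeparable k x :=
    PerfectField.separable_of_irreducible (minpoly.irreducible hx.isIntegral)
  have mem_bot : x ∈ (⊥ : Subalgebra K L) := by
    by_contra hbot
    obtain ⟨y, hne, hconj⟩ := (notMem_iff_exists_ne_and_isConjRoot (separable.tower_top K)
      (Normal.splits inferInstance x)).1 hbot
    obtain ⟨τ, rfl⟩ := isConjRoot_iff_exists_algEquiv.1 hconj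
    exact hne (τ.injective (hfix τ))
  obtain ⟨y, rfl⟩ := Algebra.mem_bot.1 mem_bot
  have hy : IsIntegral k y :=
    ((isAlgebraic_algebraMap_iff (algebraMap K L).injective).1 hx).isIntegral
  obtain ⟨z, rfl⟩ := IsIntegrallyClosedIn.isIntegral_iff.1 hy
  exact ⟨z, IsScalarTower.algebraMap_apply k K L z⟩

theorem exists_mem_primaryAffinePows_aeval_eq {k K L : Type*} [Field k] [PerfectField k]
    [Field K] [Algebra k K] [IsIntegrallyClosedIn k K] [Field L] [Algebra k L] [Algebra K L]
    [IsScalarTower k K L] [Normal K L] {S : Set ℕ} {m : ℕ} (hm : m ≠ 0) {f g : K}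
    (hg : Transcendental k g) {A : L[X]} (hA : A ∈ primaryAffinePows S m L)
    (h : A.eval (algebraMap K L g) = algebraMap K L f) :
    ∃ B ∈ primaryAffinePows S m k, aeval g B = f := by
  have hgL : Transcendental k (algebraMap K L g) := by
    rwa [Transcendental, isAlgebraic_algebraMap_iff (algebraMap K L).injective]
  have map_fixed (τ : L ≃ₐ[K] L) : A.map (τ : L →+* L) = A := by
    refine eq_of_eval_eq_of_transcendental
      (map_mem_primaryAffinePows (RingHom.injective _) hA) hA hgL ?_
    have := eval_map_apply (p := A) (τ : L →+* L) (algebraMap K L g)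
    simpa [h] using this
  obtain ⟨a, c, ha, hc, rfl⟩ := hA
  have fixed (τ : L ≃ₐ[K] L) : a = τ a ∧ c = τ c :=
    (affinePow_inj hm ha.ne_zero hc.ne_zero).1 <|
      (map_fixed τ).symm.trans (map_affinePow (τ : L →+* L) a c)
  obtain ⟨a, rfl⟩ := mem_range_algebraMap_of_forall_algEquiv_apply_eq (K := K)
    (ha.isAlgebraic (k := k)) fun τ => (fixed τ).1.symm
  obtain ⟨c, rfl⟩ := mem_range_algebraMap_of_forall_algEquiv_apply_eq (K := K)
    (hc.isAlgebraic (k := k)) fun τ => (fixed τ).2.symm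
  have injective : Injective (algebraMap k L : k →* L) := (algebraMap k L).injective
  refine ⟨_, ⟨a, c, (primaryOutside_map_iff injective).1 ha,
    (primaryOutside_map_iff injective).1 hc, rfl⟩, (algebraMap K L).injective ?_⟩
  rw [← h, ← map_affinePow, eval_map_algebraMap, aeval_algebraMap_apply]

theorem IsFunctionFieldOneVar.isIntegrallyClosedIn {k K : Type*} [Field k] [Field K] [Algebra k K]
    (hK : IsFunctionFieldOneVar k K) : IsIntegrallyClosedIn k K :=
  isIntegrallyClosedIn_iff.2 ⟨(algebraMap k K).injective, fun {x} hx => hK.2 x hx.isAlgebraic⟩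

theorem IsFunctionFieldOneVar.transcendental {k K : Type*} [Field k] [Field K] [Algebra k K]
    (hK : IsFunctionFieldOneVar k K) {g : K} (hg : g ∉ (algebraMap k K).range) :
    Transcendental k g :=
  mt (hK.2 g) hg

theorem isTranscendenceBasis_const_iff {ι k K : Type*} [Unique ι] [Field k] [Field K] [Algebra k K]
    {t : K} : IsTranscendenceBasis k (fun _ : ι => t) ↔
      Transcendental k t ∧ Algebra.IsAlgebraic k⟮t⟯ K := by
  rw [isTranscendenceBasis_iff_algebraicIndependent_isAlgebraic,
    algebraicIndependent_unique_type_iff, Set.range_const, isAlgebraic_adjoin_iff_top]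

theorem IsFunctionFieldOneVar.isAlgebraic_adjoin {k K : Type*} [Field k] [Field K] [Algebra k K]
    (hK : IsFunctionFieldOneVar k K) {g : K} (hg : Transcendental k g) :
    Algebra.IsAlgebraic k⟮g⟯ K := by
  obtain ⟨⟨t, ht, _⟩, -⟩ := hK
  have basis : IsTranscendenceBasis k (fun _ : PUnit => t) :=
    isTranscendenceBasis_const_iff.2 ⟨ht, inferInstance⟩
  have independent : AlgebraicIndependent k (fun _ : PUnit => g) :=
    algebraicIndependent_unique_type_iff.2 hg
  exact (isTranscendenceBasis_const_iff.1 <|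
    independent.isTranscendenceBasis_of_trdeg_le_of_finite basis.cardinalMk_eq_trdeg.ge).2

theorem exists_mem_primaryAffinePows_aeval_eq_of_finite_exceptionalPlaces {k K : Type*} [Field k]
    [Fintype k] [Field K] [Algebra k K] [IsIntegrallyClosedIn k K] {p : ℕ} [CharP k p] {S : Set ℕ}
    (hS : IsLargeFor (Fintype.card k) p S) {m : ℕ} (hm : m ≠ 0) {f g : K}
    (hg : Transcendental k g) [Algebra.IsAlgebraic k⟮g⟯ K]
    (hQ : (exceptionalPlaces k S m f g).Finite) :
    ∃ A ∈ primaryAffinePows S m k, aeval g A = f := by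
  let L := AlgebraicClosure K
  have : Algebra.IsAlgebraic k⟮g⟯ L := .trans k⟮g⟯ K L
  have : IsAlgClosure k⟮g⟯ L := ⟨inferInstance, inferInstance⟩
  have f_algebraic : IsAlgebraic k⟮g⟯ (algebraMap K L f) := Algebra.IsAlgebraic.isAlgebraic _
  obtain ⟨F, hF0, hF⟩ := exists_aevalAeval_eq_zero_iff_aeval_eq_zero (L := L)
    (minpoly.ne_zero f_algebraic.isIntegral)
  have hfg : aevalAeval g f F = 0 := (algebraMap K L).injective <| by
    rw [map_zero, ← (hF _).2 (minpoly.aeval _ _)]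
    exact map_aevalAeval (IsScalarTower.toAlgHom k K L) g f F
  obtain ⟨A, hA, hAF⟩ :=
    exists_mem_primaryAffinePows_aevalAeval_X_eq_zero L hS hg hQ hF0 hfg
  let γ : L := algebraMap k⟮g⟯ L (AdjoinSimple.gen k g)
  have eval_conj : aeval (A.eval γ) (minpoly k⟮g⟯ (algebraMap K L f)) = 0 := (hF _).1 <| by
    have := map_aevalAeval ((aeval (R := L) γ).restrictScalars k) X A F
    rw [hAF, map_zero] at this
    simpa using this.symm
  obtain ⟨B, hB, hBf⟩ := exists_mem_primaryAffinePows_eval_eq hA eval_conj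
  exact exists_mem_primaryAffinePows_aeval_eq hm hg hB hBf

theorem prop_3_12_ii_general {k K : Type*} [Field k] [Fintype k] [Field K] [Algebra k K]
    [IsIntegrallyClosedIn k K] {p : ℕ} [CharP k p] {S : Set ℕ}
    (hS : IsLargeFor (Fintype.card k) p S) {m : ℕ} (hm : m ≠ 0) {f g : K}
    (hg : Transcendental k g) [Algebra.IsAlgebraic k⟮g⟯ K]
    (hQ : {O : ValuationSubring K |
      (∀ c : k, algebraMap k K c ∈ O) ∧ O ≠ ⊤ ∧
      ∃ (hfO : f ∈ O) (hgO : g ∈ O),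
        ¬ ∃ a c : AlgebraicClosure (IsLocalRing.ResidueField O),
          a ≠ 0 ∧ c ≠ 0 ∧ PrimaryOutside S a ∧ PrimaryOutside S c ∧
          algebraMap _ _ (IsLocalRing.residue O ⟨f, hfO⟩) =
            a * (1 + c * algebraMap _ _ (IsLocalRing.residue O ⟨g, hgO⟩)) ^ m}.Finite) :
    ∃ a c : k, a ≠ 0 ∧ c ≠ 0 ∧ PrimaryOutside S a ∧ PrimaryOutside S c ∧
      f = algebraMap k K a * (1 + algebraMap k K c * g) ^ m := by
  have exceptional_finite : (exceptionalPlaces k S m f g).Finite := by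
    refine hQ.subset fun O ⟨hk, hO, hfO, hgO, hne⟩ => ⟨hk, hO, hfO, hgO, ?_⟩
    rintro ⟨a, c, -, -, ha, hc, h⟩
    exact hne ⟨_, ⟨a, c, ha, hc, rfl⟩, h.trans (eval_affinePow _ a c).symm⟩
  obtain ⟨_, ⟨a, c, ha, hc, rfl⟩, rfl⟩ :=
    exists_mem_primaryAffinePows_aeval_eq_of_finite_exceptionalPlaces hS hm hg exceptional_finite
  exact ⟨a, c, ha.ne_zero, hc.ne_zero, ha, hc, aeval_affinePow g a c⟩

/-- **Definition/Proposition 3.12 (ii), combined with the descent of 3.12 (i)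
(`Q̄_{1,Σ}^{(m)} ⟹ P_Σ^{(m)}`).** Let `K` be a function field of one variable over a
finite field `k` of cardinality `q` and characteristic `p`, `S` a `k`-large set of primes
and `m ≥ 1`. If `f, g ∈ K ∖ k` are such that for all but finitely many places `O` of `K`
with `f, g ∈ O` one has `f(O) = a·(1 + c·g(O))^m` in an algebraic closure of the residue
field for some nonzero `a, c` of `S'`-primary order, then `f = a·(1 + c·g)^m` for some
`a, c ∈ k^×` of `S'`-primary order. -/
theorem prop_3_12_ii
    (m : ℕ) (hm : 0 < m)
    (k K : Type) [Field k] [Fintype k] [Field K] [Algebra k K]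
    (p q : ℕ) (hp : p.Prime) [CharP k p] (hq : q = Fintype.card k)
    (hK : IsFunctionFieldOneVar k K)
    (S : Set ℕ) (hlarge : IsLargeFor q p S)
    (f g : K) (hf : f ∉ (algebraMap k K).range) (hg : g ∉ (algebraMap k K).range)
    (hQ : {O : ValuationSubring K |
      (∀ c : k, algebraMap k K c ∈ O) ∧ O ≠ ⊤ ∧
      ∃ (hfO : f ∈ O) (hgO : g ∈ O),
        ¬ ∃ a c : AlgebraicClosure (IsLocalRing.ResidueField ↥O),
          a ≠ 0 ∧ c ≠ 0 ∧ PrimaryOutside S a ∧ PrimaryOutside S c ∧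
          algebraMap (IsLocalRing.ResidueField ↥O) (AlgebraicClosure (IsLocalRing.ResidueField ↥O))
              (IsLocalRing.residue ↥O ⟨f, hfO⟩) =
            a * (1 + c * algebraMap (IsLocalRing.ResidueField ↥O)
              (AlgebraicClosure (IsLocalRing.ResidueField ↥O))
              (IsLocalRing.residue ↥O ⟨g, hgO⟩)) ^ m}.Finite) :
    ∃ a c : k, a ≠ 0 ∧ c ≠ 0 ∧ PrimaryOutside S a ∧ PrimaryOutside S c ∧
      f = algebraMap k K a * (1 + algebraMap k K c * g) ^ m := by
  subst hq
  have := hK.isIntegrallyClosedIn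
  have := hK.isAlgebraic_adjoin (hK.transcendental hg)
  exact prop_3_12_ii_general hlarge hm.ne' (hK.transcendental hg) hQ
end

section
/- (Lemma 4.8, abstract form) Let κ ⊆ 𝒦 be a field extension and let g ∈ 𝒦 ∖ κ. Let U be a subgroup of 𝒦^× containing κ^× and of finite index n in 𝒦^×, and assume the cardinality of κ is greater than 2n (in particular, this holds whenever κ is infinite). Then there exist three pairwise distinct elements a, b, c ∈ κ such that, setting f := ((a−b)/(b−c))·((g−c)/(g−a)) ∈ 𝒦, one has f ∈ U, 1 + f ∈ U, and f ∉ κ. In particular, f is a fractional linear transformation of g with coefficients in κ, so that when 𝒦 is a function field the degree of f equals the degree of g. -/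
/-!
The map `f(g) = ((a-b)/(b-c))·((g-c)/(g-a))` vanishes at `c`, takes the value `-1` at `b` and has
its pole at `a`, so modulo `κˣ` the elements `f` and `1 + f` are `(g-c)/(g-a)` and `(g-b)/(g-a)`.
It therefore suffices that `g - a`, `g - b` and `g - c` lie in one coset of `U`; since there are
more than twice as many elements of `κ` as cosets, some coset contains `g - x` for three values
of `x`.
-/

open Cardinal

universe u v

theorem exists_three_ne_map_eq_of_two_mul_mk_lt {α : Type u} {β : Type v} (f : α → β)
    (hcard : 2 * lift.{u} #β < lift.{v} #α) :
    ∃ a b c : α, a ≠ b ∧ b ≠ c ∧ a ≠ c ∧ f a = f b ∧ f a = f c := by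
  obtain ⟨y, hy⟩ : ∃ y, 2 < #(f ⁻¹' {y}) := by
    by_contra! hfibre
    have hle : lift.{v} #α ≤ lift.{u} #β * 2 :=
      lift_mk_le_lift_mk_mul_of_lift_mk_preimage_le f (by simpa using hfibre)
    exact hcard.not_ge (mul_comm (lift.{u} #β) 2 ▸ hle)
  obtain ⟨⟨a, ha⟩, ⟨b, hb⟩, hab⟩ := two_le_iff.mp hy.le
  have hthree : 3 ≤ #(f ⁻¹' {y}) :=
    two_add_one_eq_three (R := Cardinal) ▸ add_one_le_of_lt hy
  obtain ⟨⟨c, hc⟩, hca, hcb⟩ := exists_ne_ne_of_three_le hthree ⟨a, ha⟩ ⟨b, hb⟩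
  simp only [ne_eq, Subtype.mk.injEq] at hab hca hcb
  exact ⟨a, b, c, hab, Ne.symm hcb, Ne.symm hca, ha.trans hb.symm, ha.trans hc.symm⟩

theorem div_mem_ofUnits {G₀ : Type*} [GroupWithZero G₀] {U : Subgroup G₀ˣ} {x y : G₀}
    (hx : x ∈ U.ofUnits) (hy : y ∈ U.ofUnits) : x / y ∈ U.ofUnits := by
  obtain ⟨u, hu, rfl⟩ := hx
  obtain ⟨w, hw, rfl⟩ := hy
  exact ⟨u / w, U.div_mem hu hw, Units.val_div_eq_div_val u w⟩

theorem div_mem_ofUnits_of_mk_eq_mk {G₀ : Type*} [CommGroupWithZero G₀] {U : Subgroup G₀ˣ}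
    {u w : G₀ˣ} (h : (u : G₀ˣ ⧸ U) = w) : (w / u : G₀) ∈ U.ofUnits :=
  ⟨u⁻¹ * w, QuotientGroup.eq.mp h, by simp [div_eq_inv_mul]⟩

section ThreePointMoebius

variable {K : Type*} [Field K] {a b c g : K}

/-- The Möbius transformation with `a ↦ ∞`, `b ↦ -1`, `c ↦ 0`, evaluated at `g`. Division by zero
makes its value at the pole `g = a` equal to `0`. -/
def threePointMoebius (a b c g : K) : K := (a - b) / (b - c) * ((g - c) / (g - a))

theorem one_add_threePointMoebius (hbc : b ≠ c) (hga : g ≠ a) :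
    1 + threePointMoebius a b c g = (a - c) / (b - c) * ((g - b) / (g - a)) := by
  have hbc' := sub_ne_zero.mpr hbc
  have hga' := sub_ne_zero.mpr hga
  unfold threePointMoebius
  field_simp
  ring

theorem mem_of_threePointMoebius_mem {F : Subfield K} (ha : a ∈ F) (hb : b ∈ F) (hc : c ∈ F)
    (hab : a ≠ b) (hbc : b ≠ c) (hac : a ≠ c) (h : threePointMoebius a b c g ∈ F) : g ∈ F := by
  by_cases hga : g = a
  · exact hga ▸ ha
  have hab' := sub_ne_zero.mpr hab
  have hbc' := sub_ne_zero.mpr hbc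
  have hac' := sub_ne_zero.mpr hac
  have hga' := sub_ne_zero.mpr hga
  have hquot : (a - c) / (g - a) = threePointMoebius a b c g / ((a - b) / (b - c)) - 1 := by
    unfold threePointMoebius
    field_simp
    ring
  have hquot_mem : (a - c) / (g - a) ∈ F :=
    hquot ▸ F.sub_mem (F.div_mem h (F.div_mem (F.sub_mem ha hb) (F.sub_mem hb hc))) F.one_mem
  have hg : g = a + (a - c) / ((a - c) / (g - a)) := by
    rw [div_div_cancel₀ hac']
    ring
  exact hg ▸ F.add_mem ha (F.div_mem (F.sub_mem ha hc) hquot_mem)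

end ThreePointMoebius

theorem lemma_4_8_general {κ : Type u} {𝒦 : Type v} [Field κ] [Field 𝒦] [Algebra κ 𝒦]
    (g : 𝒦) (hg : g ∉ (algebraMap κ 𝒦).range) (U : Subgroup 𝒦ˣ)
    (hκU : ∀ x : κˣ, Units.map (algebraMap κ 𝒦).toMonoidHom x ∈ U)
    (hcard : 2 * lift.{u} #(𝒦ˣ ⧸ U) < lift.{v} #κ) :
    ∃ a b c : κ, a ≠ b ∧ b ≠ c ∧ a ≠ c ∧
      let f := threePointMoebius (algebraMap κ 𝒦 a) (algebraMap κ 𝒦 b) (algebraMap κ 𝒦 c) g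
      f ∈ U.ofUnits ∧ 1 + f ∈ U.ofUnits ∧ f ∉ (algebraMap κ 𝒦).range := by
  have hg_ne (x : κ) : g ≠ algebraMap κ 𝒦 x := fun h => hg ⟨x, h.symm⟩
  have hsub_mem {x y : κ} (hxy : x ≠ y) : algebraMap κ 𝒦 x - algebraMap κ 𝒦 y ∈ U.ofUnits :=
    ⟨_, hκU (Units.mk0 (x - y) (sub_ne_zero.mpr hxy)), map_sub (algebraMap κ 𝒦) x y⟩
  obtain ⟨a, b, c, hab, hbc, hac, hcoset_ab, hcoset_ac⟩ :=
    exists_three_ne_map_eq_of_two_mul_mk_lt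
      (fun x : κ => (Units.mk0 _ (sub_ne_zero.mpr (hg_ne x)) : 𝒦ˣ ⧸ U)) hcard
  have hinj := (algebraMap κ 𝒦).injective
  refine ⟨a, b, c, hab, hbc, hac, ?_, ?_, fun hf => hg ?_⟩
  · exact mul_mem (div_mem_ofUnits (hsub_mem hab) (hsub_mem hbc))
      (div_mem_ofUnits_of_mk_eq_mk hcoset_ac)
  · rw [one_add_threePointMoebius (hinj.ne hbc) (hg_ne a)]
    exact mul_mem (div_mem_ofUnits (hsub_mem hac) (hsub_mem hbc))
      (div_mem_ofUnits_of_mk_eq_mk hcoset_ab)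
  · exact mem_of_threePointMoebius_mem (F := (algebraMap κ 𝒦).fieldRange) ⟨a, rfl⟩ ⟨b, rfl⟩
      ⟨c, rfl⟩ (hinj.ne hab) (hinj.ne hbc) (hinj.ne hac) hf

/-- **Lemma 4.8 (abstract form).** Let `κ ⊆ 𝒦` be a field extension, `g ∈ 𝒦 ∖ κ`, and
`U` a subgroup of `𝒦ˣ` containing `κˣ` of finite index `n`, with `#κ > 2n`. Then there
are pairwise distinct `a, b, c ∈ κ` such that the fractional linear transformation
`f = ((a−b)/(b−c))·((g−c)/(g−a))` of `g` satisfies `f ∈ U`, `1 + f ∈ U` and `f ∉ κ`. -/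
theorem lemma_4_8
    (κ 𝒦 : Type) [Field κ] [Field 𝒦] [Algebra κ 𝒦]
    (g : 𝒦) (hg : g ∉ (algebraMap κ 𝒦).range)
    (U : Subgroup 𝒦ˣ)
    (hκU : ∀ x : κˣ, Units.map (algebraMap κ 𝒦).toMonoidHom x ∈ U)
    (hfin : U.index ≠ 0)
    (hcard : ((2 * U.index : ℕ) : Cardinal) < Cardinal.mk κ) :
    ∃ a b c : κ, a ≠ b ∧ b ≠ c ∧ a ≠ c ∧
      ((∃ u : 𝒦ˣ, (u : 𝒦) =
          (algebraMap κ 𝒦 a - algebraMap κ 𝒦 b) / (algebraMap κ 𝒦 b - algebraMap κ 𝒦 c) *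
            ((g - algebraMap κ 𝒦 c) / (g - algebraMap κ 𝒦 a)) ∧ u ∈ U) ∧
       (∃ w : 𝒦ˣ, (w : 𝒦) = 1 +
          (algebraMap κ 𝒦 a - algebraMap κ 𝒦 b) / (algebraMap κ 𝒦 b - algebraMap κ 𝒦 c) *
            ((g - algebraMap κ 𝒦 c) / (g - algebraMap κ 𝒦 a)) ∧ w ∈ U) ∧
       (algebraMap κ 𝒦 a - algebraMap κ 𝒦 b) / (algebraMap κ 𝒦 b - algebraMap κ 𝒦 c) *
          ((g - algebraMap κ 𝒦 c) / (g - algebraMap κ 𝒦 a)) ∉ (algebraMap κ 𝒦).range) := by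
  have : U.FiniteIndex := ⟨hfin⟩
  simpa only [Subgroup.mem_ofUnits_iff, and_comm, threePointMoebius] using
    lemma_4_8_general g hg U hκU (by simpa [Subgroup.index, Nat.cast_card] using hcard)
end

section
/- (Core of Lemma 4.12 (ii)) Let K be an infinite field and let H be a subfield of K such that the subgroup H^× = H ∖ {0} has finite index in the multiplicative group K^×. Then H = K. -/
/-!
The cosets of `H^×` cover `K^×`, so finitely many lines of the `H`-vector space `K` cover `K`.
The field `H` is infinite, since otherwise `K^×` would be a finite union of finite cosets.
A vector space over an infinite field is not a finite union of proper subspaces, so one of these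
lines is all of `K`; as it contains `1`, it is `H` itself.
-/

theorem infinite_units (G₀ : Type*) [GroupWithZero G₀] [Infinite G₀] : Infinite G₀ˣ :=
  have : Infinite {x : G₀ // x ≠ 0} := (Set.finite_singleton 0).infinite_compl.to_subtype
  unitsEquivNeZero.infinite_iff.mpr this

theorem infinite_subgroup_of_finiteIndex {G : Type*} [Group G] [Infinite G] (U : Subgroup G)
    [U.FiniteIndex] : Infinite U := by
  by_contra hU
  have : Finite U := not_infinite_iff_finite.mp hU
  have : Finite G := (finite_iff_subgroup_quotient U).mpr ⟨this, inferInstance⟩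
  exact not_finite G

section Subfield

variable {K : Type*} [DivisionRing K] {H : Subfield K} {U : Subgroup Kˣ}

theorem infinite_subfield_of_finiteIndex_units [Infinite K] [U.FiniteIndex]
    (hU : ∀ x ∈ U, (x : K) ∈ H) : Infinite H := by
  have : Infinite Kˣ := infinite_units K
  have : Infinite U := infinite_subgroup_of_finiteIndex U
  refine Infinite.of_injective (fun x : U ↦ (⟨(x : Kˣ), hU x x.2⟩ : H)) fun x y hxy ↦ ?_
  exact Subtype.ext (Units.ext (congrArg Subtype.val hxy))

-- The inverse turns the left cosets `g U` of the quotient into right cosets `U g⁻¹`, which lie on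
-- lines for the left action of `H`.
theorem iUnion_span_inv_out_eq_univ (hU : ∀ x ∈ U, (x : K) ∈ H) :
    ⋃ q : Kˣ ⧸ U, (Submodule.span H {((q.out⁻¹ : Kˣ) : K)} : Set K) = Set.univ := by
  refine Set.eq_univ_of_forall fun x ↦ Set.mem_iUnion.mpr ?_
  rcases eq_or_ne x 0 with rfl | hx
  · exact ⟨(1 : Kˣ), Submodule.zero_mem _⟩
  · lift x to Kˣ using hx.isUnit
    let q : Kˣ ⧸ U := QuotientGroup.mk x⁻¹
    have hxq : x * q.out ∈ U := by
      simpa only [inv_inv] using QuotientGroup.eq.mp (QuotientGroup.out_eq' q).symm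
    refine ⟨q, Submodule.mem_span_singleton.mpr ⟨⟨(x * q.out : Kˣ), hU _ hxq⟩, ?_⟩⟩
    exact congrArg Units.val (mul_inv_cancel_right x q.out)

theorem eq_top_of_span_singleton_eq_top {y : K} (hy : Submodule.span H {y} = ⊤) : H = ⊤ := by
  have exists_smul_eq (x : K) : ∃ c : H, c • y = x :=
    (Submodule.span_singleton_eq_top_iff H y).mp hy x
  obtain ⟨c, hc⟩ := exists_smul_eq 1
  have hyH : y ∈ H := by
    rw [eq_inv_of_mul_eq_one_right hc]
    exact H.inv_mem c.2
  refine eq_top_iff.mpr fun x _ ↦ ?_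
  obtain ⟨d, rfl⟩ := exists_smul_eq x
  exact H.mul_mem d.2 hyH

theorem subfield_of_finite_index_eq_top_general [Infinite K] [U.FiniteIndex]
    (hU : ∀ x ∈ U, (x : K) ∈ H) : H = ⊤ := by
  have : Infinite H := infinite_subfield_of_finiteIndex_units hU
  obtain ⟨q, hq⟩ := Subspace.exists_eq_top_of_iUnion_eq_univ (iUnion_span_inv_out_eq_univ hU)
  exact eq_top_of_span_singleton_eq_top hq

end Subfield

/-- **Core of Lemma 4.12 (ii).** Let `K` be an infinite field and `H` a subfield of `K`
such that `H^× = H ∖ {0}` has finite index in the multiplicative group `K^×` (expressed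
via the subgroup `U` of `Kˣ` consisting of the units lying in `H`). Then `H = K`. -/
theorem subfield_of_finite_index_eq_top
    (K : Type) [Field K] [Infinite K] (H : Subfield K)
    (U : Subgroup Kˣ) (hU : ∀ x : Kˣ, x ∈ U ↔ (x : K) ∈ H)
    (hindex : U.index ≠ 0) :
    H = ⊤ := by
  have : U.FiniteIndex := ⟨hindex⟩
  exact subfield_of_finite_index_eq_top_general fun x ↦ (hU x).mp
end
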